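/- Let F : ℝ^n ⇒ ℝ^p be a nearly convex set-valued mapping and let Θ ⊆ ℝ^p be a nearly convex set. Suppose ri(rge F) ∩ ri Θ ≠ ∅. Define F₀(x) = ri F(x) for x ∈ ℝ^n. Then ri(F⁻¹(Θ)) = ri(dom F) ∩ F₀⁻¹(ri Θ), where for a set-valued mapping H and a set S, H⁻¹(S) = {x | H(x) ∩ S ≠ ∅}. -/

import Mathlib

/-!
In finite dimensions the relative interior of a nearly convex set `s` behaves like that of a convex
set: it is nonempty when `s` is (`ri_nonempty`), open segments from a point of `ri s` to a point of
`closure s` stay in `ri s` (`ri_segment`), and points of `ri s` allow every segment of `s` ending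
there to be prolonged inside `s` (`ri_prolong`). Conversely, a point `a` such that the segment from
one point of `ri s` to `a` can be prolonged inside `s` lies in `ri s` (`mem_ri_of_prolong`).

These facts give the calculus rules `ri (L '' s) = L '' ri s` for linear `L` (`ri_image`) and
`ri (s ∩ t) = ri s ∩ ri t` when `ri s` meets `ri t` (`ri_inter`). Cutting the graph of `F` with a
vertical fibre `{x} ×ˢ univ` shows that `ri (F x)` is the fibre of `ri (gph F)` over `x` whenever
`x ∈ ri (domSV F)` (`mem_ri_fiber_iff`). Finally, `F⁻¹(Θ)` is the first projection of
`gph F ∩ univ ×ˢ Θ`; the hypothesis `ri (rge F) ∩ ri Θ ≠ ∅` is the qualification condition that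
allows the intersection rule to be applied, and the projection rule finishes the proof.
-/

open Set Metric

noncomputable section

/-- A set is *nearly convex* if it lies between a convex set and its closure. -/
def NearlyConvex {E : Type*} [NormedAddCommGroup E] [NormedSpace ℝ E] (s : Set E) : Prop :=
  ∃ C : Set E, Convex ℝ C ∧ C ⊆ s ∧ s ⊆ closure C

/-- The *relative interior* of a set: points `a ∈ s` admitting `δ > 0` with
`B(a,δ) ∩ aff s ⊆ s`. -/
def ri {E : Type*} [NormedAddCommGroup E] [NormedSpace ℝ E] (s : Set E) : Set E :=
  {a | a ∈ s ∧ ∃ δ > 0, Metric.ball a δ ∩ (affineSpan ℝ s : Set E) ⊆ s}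

/-- The graph of a set-valued mapping. -/
def gph {E P : Type*} (F : E → Set P) : Set (E × P) := {q | q.2 ∈ F q.1}

/-- The domain of a set-valued mapping. -/
def domSV {E P : Type*} (F : E → Set P) : Set E := {x | (F x).Nonempty}

section General

set_option linter.unusedSectionVars false

variable {E G : Type*} [NormedAddCommGroup E] [NormedSpace ℝ E] [FiniteDimensional ℝ E]
  [NormedAddCommGroup G] [NormedSpace ℝ G] [FiniteDimensional ℝ G]

lemma closure_subset_affineSpan (C : Set E) : closure C ⊆ (affineSpan ℝ C : Set E) :=
  closure_minimal (subset_affineSpan ℝ C) (AffineSubspace.closed_of_finiteDimensional _)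

lemma affineSpan_eq_of_between {C s : Set E} (h1 : C ⊆ s) (h2 : s ⊆ closure C) :
    affineSpan ℝ s = affineSpan ℝ C :=
  le_antisymm (affineSpan_le.2 (h2.trans (closure_subset_affineSpan C))) (affineSpan_mono ℝ h1)

/-- The line segment principle for convex sets. -/
lemma convex_ri_segment {C : Set E} (hC : Convex ℝ C) {x z : E} (hx : x ∈ ri C)
    (hz : z ∈ closure C) {t : ℝ} (h0 : 0 < t) (h1 : t < 1) :
    (1 - t) • x + t • z ∈ ri C := by
  obtain ⟨hxC, δ, hδ, hball⟩ := hx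
  have ht : 0 < 1 - t := by linarith
  have hη : 0 < (1 - t) * δ / 2 := by positivity
  obtain ⟨z', hz'C, hz'⟩ := Metric.mem_closure_iff.1 hz _ hη
  have hcomb : ∀ u ∈ affineSpan ℝ C, ∀ v ∈ affineSpan ℝ C, ∀ r : ℝ,
      u + r • (v - u) ∈ affineSpan ℝ C := by
    intro u hu v hv r
    have := AffineMap.lineMap_mem r hu hv
    rwa [AffineMap.lineMap_apply, vsub_eq_sub, vadd_eq_add, add_comm] at this
  -- A point `w` near `(1 - t) x + t z` is a convex combination of `z' ∈ C` and a point near `x`.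
  have key : ball ((1 - t) • x + t • z) ((1 - t) * δ / 2) ∩ (affineSpan ℝ C : Set E) ⊆ C := by
    rintro w ⟨hw, hwA⟩
    have hz'A : z' ∈ affineSpan ℝ C := subset_affineSpan ℝ C hz'C
    have hv : z' + (1 - t)⁻¹ • (w - z') ∈ C := by
      apply hball
      refine ⟨?_, hcomb _ hz'A _ hwA _⟩
      have e : z' + (1 - t)⁻¹ • (w - z') - x
          = (1 - t)⁻¹ • ((w - ((1 - t) • x + t • z)) + t • (z - z')) := by
        have : z' - x = (1 - t)⁻¹ • ((1 - t) • (z' - x)) := by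
          rw [smul_smul, inv_mul_cancel₀ ht.ne', one_smul]
        rw [add_sub_right_comm, this, ← smul_add]
        congr 1
        module
      rw [mem_ball, dist_eq_norm, e, norm_smul, Real.norm_of_nonneg (inv_pos.2 ht).le,
        inv_mul_lt_iff₀ ht]
      rw [mem_ball, dist_eq_norm] at hw
      rw [dist_eq_norm] at hz'
      have h3 : ‖t • (z - z')‖ ≤ ‖z - z'‖ := by
        rw [norm_smul, Real.norm_of_nonneg h0.le]
        exact mul_le_of_le_one_left (norm_nonneg _) h1.le
      have := norm_add_le (w - ((1 - t) • x + t • z)) (t • (z - z'))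
      linarith
    have := hC hv hz'C ht.le h0.le (by ring)
    have e2 : (1 - t) • (z' + (1 - t)⁻¹ • (w - z')) + t • z' = w := by
      rw [smul_add, smul_smul, mul_inv_cancel₀ ht.ne', one_smul]
      module
    rwa [e2] at this
  refine ⟨key ⟨mem_ball_self hη, ?_⟩, _, hη, key⟩
  have := hcomb x (subset_affineSpan ℝ C hxC) z (closure_subset_affineSpan C hz) t
  have e : (1 - t) • x + t • z = x + t • (z - x) := by module
  rw [e]
  exact this

lemma convex_ri_nonempty {C : Set E} (hC : Convex ℝ C) (h : C.Nonempty) : (ri C).Nonempty := by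
  obtain ⟨a, ha⟩ := Set.Nonempty.intrinsicInterior hC h
  obtain ⟨y, hy, rfl⟩ := mem_intrinsicInterior.1 ha
  obtain ⟨δ, hδ, hb⟩ := Metric.mem_nhds_iff.1 (mem_interior_iff_mem_nhds.1 hy)
  have hyC : y ∈ ((↑) ⁻¹' C : Set (affineSpan ℝ C)) := interior_subset hy
  refine ⟨y, hyC, δ, hδ, fun w hw => ?_⟩
  have hwball : (⟨w, hw.2⟩ : affineSpan ℝ C) ∈ ball y δ := hw.1
  exact hb hwball

/-- Every segment of `s` ending at a point `a ∈ ri s` can be prolonged beyond `a` inside `s`. -/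
lemma ri_prolong {s : Set E} {a x : E} (ha : a ∈ ri s) (hx : x ∈ s) :
    ∃ ε > 0, ∀ t : ℝ, 0 < t → t < ε → a + t • (a - x) ∈ s := by
  obtain ⟨has, δ, hδ, hb⟩ := ha
  refine ⟨δ / (‖a - x‖ + 1), by positivity, fun t h0 ht => hb ⟨?_, ?_⟩⟩
  · rw [lt_div_iff₀ (by positivity)] at ht
    rw [mem_ball, dist_eq_norm, add_sub_cancel_left, norm_smul, Real.norm_of_nonneg h0.le]
    nlinarith
  · have := AffineMap.lineMap_mem (1 + t) (subset_affineSpan ℝ s hx) (subset_affineSpan ℝ s has)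
    rw [AffineMap.lineMap_apply, vsub_eq_sub, vadd_eq_add] at this
    have e : a + t • (a - x) = (1 + t) • (a - x) + x := by module
    rw [e]
    exact this

lemma ri_prolong_exists {s : Set E} {a x : E} (ha : a ∈ ri s) (hx : x ∈ s) :
    ∃ t : ℝ, 0 < t ∧ a + t • (a - x) ∈ s := by
  obtain ⟨ε, hε, h⟩ := ri_prolong ha hx
  exact ⟨ε / 2, by positivity, h _ (by positivity) (by linarith)⟩

/-- A point `a` is a convex combination of `b` and its prolongation `a + t (a - b)`. -/
lemma prolong_combination (a b : E) {t : ℝ} (ht : 0 < t) :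
    (1 - (1 + t)⁻¹) • b + (1 + t)⁻¹ • (a + t • (a - b)) = a := by
  have h : (1 + t) ≠ 0 := by positivity
  match_scalars <;> field_simp
  ring

/-- A nearly convex set has the same relative interior as the convex set it is built on. -/
lemma ri_eq_of_between {C s : Set E} (hC : Convex ℝ C) (h1 : C ⊆ s) (h2 : s ⊆ closure C) :
    ri s = ri C := by
  apply Subset.antisymm
  · intro a ha
    have hne : C.Nonempty := closure_nonempty_iff.1 ⟨a, h2 ha.1⟩
    obtain ⟨b, hb⟩ := convex_ri_nonempty hC hne
    obtain ⟨t, ht, hz⟩ := ri_prolong_exists ha (h1 hb.1)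
    rw [← prolong_combination a b ht]
    exact convex_ri_segment hC hb (h2 hz) (by positivity) (inv_lt_one_of_one_lt₀ (by linarith))
  · rintro a ⟨ha, δ, hδ, hb⟩
    refine ⟨h1 ha, δ, hδ, ?_⟩
    rw [affineSpan_eq_of_between h1 h2]
    exact hb.trans h1

lemma ri_segment {s : Set E} (hs : NearlyConvex s) {x z : E} (hx : x ∈ ri s)
    (hz : z ∈ closure s) {t : ℝ} (h0 : 0 < t) (h1 : t < 1) :
    (1 - t) • x + t • z ∈ ri s := by
  obtain ⟨C, hC, hCs, hsC⟩ := hs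
  rw [ri_eq_of_between hC hCs hsC] at hx ⊢
  exact convex_ri_segment hC hx (closure_minimal hsC isClosed_closure hz) h0 h1

lemma ri_nonempty {s : Set E} (hs : NearlyConvex s) (h : s.Nonempty) : (ri s).Nonempty := by
  obtain ⟨C, hC, hCs, hsC⟩ := hs
  rw [ri_eq_of_between hC hCs hsC]
  exact convex_ri_nonempty hC (closure_nonempty_iff.1 (h.mono hsC))

lemma mem_ri_of_prolong {s : Set E} (hs : NearlyConvex s) {a b : E} (hb : b ∈ ri s) {t : ℝ}
    (ht : 0 < t) (h : a + t • (a - b) ∈ s) : a ∈ ri s := by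
  rw [← prolong_combination a b ht]
  exact ri_segment hs hb (subset_closure h) (by positivity) (inv_lt_one_of_one_lt₀ (by linarith))

lemma convex_ri {s : Set E} (hs : NearlyConvex s) : Convex ℝ (ri s) := by
  rw [convex_iff_forall_pos]
  intro x hx y hy a b ha hb hab
  obtain rfl : a = 1 - b := by linarith
  exact ri_segment hs hx (subset_closure hy.1) hb (by linarith)

lemma NearlyConvex.image {s : Set E} (hs : NearlyConvex s) (L : E →L[ℝ] G) :
    NearlyConvex (L '' s) := by
  obtain ⟨C, hC, h1, h2⟩ := hs
  exact ⟨L '' C, hC.is_linear_image L.isLinear, image_mono h1,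
    (image_mono h2).trans (image_closure_subset_closure_image L.continuous)⟩

lemma ri_image {s : Set E} (hs : NearlyConvex s) (L : E →L[ℝ] G) :
    ri (L '' s) = L '' ri s := by
  apply Subset.antisymm
  · intro a ha
    have hne : s.Nonempty := image_nonempty.1 ⟨a, ha.1⟩
    obtain ⟨x, hx⟩ := ri_nonempty hs hne
    obtain ⟨t, ht, w, hw, hwa⟩ := ri_prolong_exists ha (mem_image_of_mem L hx.1)
    refine ⟨_, ri_segment hs hx (subset_closure hw) (t := (1 + t)⁻¹) (by positivity)
      (inv_lt_one_of_one_lt₀ (by linarith)), ?_⟩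
    rw [map_add, map_smul, map_smul, hwa, prolong_combination a (L x) ht]
  · rintro _ ⟨a, ha, rfl⟩
    obtain ⟨b, hb⟩ := ri_nonempty (hs.image L) ⟨L a, mem_image_of_mem L ha.1⟩
    obtain ⟨x, hx, rfl⟩ := hb.1
    obtain ⟨t, ht, h⟩ := ri_prolong_exists ha hx
    refine mem_ri_of_prolong (hs.image L) hb ht ⟨_, h, ?_⟩
    simp

lemma NearlyConvex.inter {s₁ s₂ : Set E} (h₁ : NearlyConvex s₁) (h₂ : NearlyConvex s₂)
    (h : (ri s₁ ∩ ri s₂).Nonempty) : NearlyConvex (s₁ ∩ s₂) := by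
  refine ⟨ri s₁ ∩ ri s₂, (convex_ri h₁).inter (convex_ri h₂),
    inter_subset_inter (fun _ h => h.1) (fun _ h => h.1), ?_⟩
  rintro x ⟨hx1, hx2⟩
  obtain ⟨b, hb1, hb2⟩ := h
  -- `x` is the limit of `(1 - t) b + t x` as `t` increases to `1`.
  have hc : Continuous fun t : ℝ => (1 - t) • b + t • x := by fun_prop
  have hmem : (1 : ℝ) ∈ closure (Ioo (0 : ℝ) 1) := by
    rw [closure_Ioo zero_ne_one]; exact ⟨zero_le_one, le_rfl⟩
  have := map_mem_closure hc hmem (t := ri s₁ ∩ ri s₂) fun t ht =>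
    ⟨ri_segment h₁ hb1 (subset_closure hx1) ht.1 ht.2,
      ri_segment h₂ hb2 (subset_closure hx2) ht.1 ht.2⟩
  simpa using this

lemma ri_inter {s₁ s₂ : Set E} (h₁ : NearlyConvex s₁) (h₂ : NearlyConvex s₂)
    (h : (ri s₁ ∩ ri s₂).Nonempty) : ri (s₁ ∩ s₂) = ri s₁ ∩ ri s₂ := by
  have h₁₂ := h₁.inter h₂ h
  apply Subset.antisymm
  · intro a ha
    obtain ⟨b, hb1, hb2⟩ := h
    obtain ⟨t, ht, hz⟩ := ri_prolong_exists ha ⟨hb1.1, hb2.1⟩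
    exact ⟨mem_ri_of_prolong h₁ hb1 ht hz.1, mem_ri_of_prolong h₂ hb2 ht hz.2⟩
  · rintro a ⟨ha1, ha2⟩
    obtain ⟨b, hb⟩ := ri_nonempty h₁₂ ⟨a, ha1.1, ha2.1⟩
    obtain ⟨ε₁, hε₁, p₁⟩ := ri_prolong ha1 hb.1.1
    obtain ⟨ε₂, hε₂, p₂⟩ := ri_prolong ha2 hb.1.2
    obtain ⟨t, ht, htε⟩ := exists_between (lt_min hε₁ hε₂)
    exact mem_ri_of_prolong h₁₂ hb ht
      ⟨p₁ t ht (htε.trans_le (min_le_left _ _)), p₂ t ht (htε.trans_le (min_le_right _ _))⟩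

lemma nearlyConvex_univ_prod {Θ : Set G} (h : NearlyConvex Θ) :
    NearlyConvex ((univ : Set E) ×ˢ Θ) := by
  obtain ⟨C, hC, h1, h2⟩ := h
  refine ⟨univ ×ˢ C, convex_univ.prod hC, prod_mono_right h1, ?_⟩
  rw [closure_prod_eq, closure_univ]
  exact prod_mono_right h2

lemma ri_univ_prod {Θ : Set G} (h : NearlyConvex Θ) :
    ri ((univ : Set E) ×ˢ Θ) = univ ×ˢ ri Θ := by
  have hP := nearlyConvex_univ_prod (E := E) h
  have himg : ContinuousLinearMap.snd ℝ E G '' ((univ : Set E) ×ˢ Θ) = Θ := by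
    ext y; simp
  apply Subset.antisymm
  · intro q hq
    refine ⟨mem_univ _, ?_⟩
    have := ri_image hP (ContinuousLinearMap.snd ℝ E G)
    rw [himg] at this
    rw [this]
    exact ⟨q, hq, rfl⟩
  · rintro q ⟨-, hq⟩
    obtain ⟨b, hb⟩ := ri_nonempty hP ⟨q, mem_univ _, hq.1⟩
    obtain ⟨t, ht, hz⟩ := ri_prolong_exists hq hb.1.2
    exact mem_ri_of_prolong hP hb ht ⟨mem_univ _, hz⟩

lemma convex_fiber (x : E) : Convex ℝ (({x} : Set E) ×ˢ (univ : Set G)) :=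
  (convex_singleton x).prod convex_univ

lemma nearlyConvex_fiber (x : E) : NearlyConvex (({x} : Set E) ×ˢ (univ : Set G)) :=
  ⟨_, convex_fiber x, Subset.rfl, subset_closure⟩

lemma ri_fiber (x : E) :
    ri (({x} : Set E) ×ˢ (univ : Set G)) = {x} ×ˢ univ := by
  apply Subset.antisymm (fun _ h => h.1)
  rintro ⟨x', y⟩ ⟨hx, -⟩
  obtain rfl : x' = x := hx
  obtain ⟨b, hb⟩ := ri_nonempty (nearlyConvex_fiber (G := G) x') ⟨(x', y), rfl, mem_univ _⟩
  refine mem_ri_of_prolong (nearlyConvex_fiber x') hb one_pos ⟨?_, mem_univ _⟩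
  have : b.1 = x' := hb.1.1
  simp [this]

lemma fst_image_gph (F : E → Set G) : ContinuousLinearMap.fst ℝ E G '' gph F = domSV F := by
  ext x; simp [gph, domSV, Set.Nonempty]

lemma snd_image_gph (F : E → Set G) : ContinuousLinearMap.snd ℝ E G '' gph F = ⋃ x, F x := by
  ext x; simp [gph]

/-- Over a point of `ri (domSV F)`, the fibre of `ri (gph F)` is the relative interior of the
value of `F`. -/
lemma mem_ri_fiber_iff {F : E → Set G} (hF : NearlyConvex (gph F)) {x : E}
    (hx : x ∈ ri (domSV F)) (y : G) : y ∈ ri (F x) ↔ (x, y) ∈ ri (gph F) := by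
  have hne : (ri (gph F) ∩ ri (({x} : Set E) ×ˢ (univ : Set G))).Nonempty := by
    rw [← fst_image_gph, ri_image hF] at hx
    obtain ⟨q, hq, hqx⟩ := hx
    exact ⟨q, hq, by rw [ri_fiber]; exact ⟨hqx, mem_univ _⟩⟩
  have himg : ContinuousLinearMap.snd ℝ E G '' (gph F ∩ ({x} : Set E) ×ˢ (univ : Set G)) = F x := by
    ext y; simp [gph]
  rw [← himg, ri_image (hF.inter (nearlyConvex_fiber x) hne),
    ri_inter hF (nearlyConvex_fiber x) hne, ri_fiber]
  simp

end General

theorem ri_inverse_image_of_nearlyConvex (n p : ℕ)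
    (F : EuclideanSpace ℝ (Fin n) → Set (EuclideanSpace ℝ (Fin p)))
    (Θ : Set (EuclideanSpace ℝ (Fin p)))
    (hF : NearlyConvex (gph F)) (hΘ : NearlyConvex Θ)
    (hqc : (ri (⋃ x, F x) ∩ ri Θ).Nonempty) :
    ri {x | (F x ∩ Θ).Nonempty} =
      ri (domSV F) ∩ {x | (ri (F x) ∩ ri Θ).Nonempty} := by
  have hT := nearlyConvex_univ_prod (E := EuclideanSpace ℝ (Fin n)) hΘ
  have hne : (ri (gph F) ∩ ri ((univ : Set (EuclideanSpace ℝ (Fin n))) ×ˢ Θ)).Nonempty := by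
    rw [← snd_image_gph, ri_image hF] at hqc
    obtain ⟨_, ⟨q, hq, rfl⟩, hqΘ⟩ := hqc
    exact ⟨q, hq, by rw [ri_univ_prod hΘ]; exact ⟨mem_univ _, hqΘ⟩⟩
  have himg : ContinuousLinearMap.fst ℝ (EuclideanSpace ℝ (Fin n)) (EuclideanSpace ℝ (Fin p)) ''
      (gph F ∩ univ ×ˢ Θ) = {x | (F x ∩ Θ).Nonempty} := by
    ext x; simp [gph, Set.Nonempty]
  rw [← himg, ri_image (hF.inter hT hne), ri_inter hF hT hne, ri_univ_prod hΘ]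
  ext x
  constructor
  · rintro ⟨q, ⟨hq, -, hqΘ⟩, rfl⟩
    have hx : q.1 ∈ ri (domSV F) := by
      rw [← fst_image_gph, ri_image hF]
      exact ⟨q, hq, rfl⟩
    exact ⟨hx, q.2, (mem_ri_fiber_iff hF hx _).2 hq, hqΘ⟩
  · rintro ⟨hx, y, hy, hyΘ⟩
    exact ⟨(x, y), ⟨(mem_ri_fiber_iff hF hx y).1 hy, mem_univ _, hyΘ⟩, rfl⟩
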